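/- Let $X$ and $Y$ be Tychonoff topological spaces of countable netweight, and let $Z$ be a compact Hausdorff space. If $C_p(X\times Z)$ is homeomorphic to $C_p(Y\times Z)$, then there exists a compact metrizable space $M$ such that $C_p(X\times M)$ is homeomorphic to $C_p(Y\times M)$. -/

import Mathlib

open TopologicalSpace Function Set Topology

/-- `Cp X`: continuous real-valued functions on `X` with the topology of pointwise
convergence (subspace topology from the product `ℝ^X`). -/
abbrev Cp (X : Type*) [TopologicalSpace X] : Type _ := {f : X → ℝ // Continuous f}

/-- A space has countable netweight if it has a countable network. -/
def HasCountableNetweight (X : Type*) [TopologicalSpace X] : Prop :=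
  ∃ S : Set (Set X), S.Countable ∧
    ∀ x : X, ∀ U : Set X, IsOpen U → x ∈ U → ∃ s ∈ S, x ∈ s ∧ s ⊆ U

/-- A map is perfect if it is continuous, closed, and has compact fibers. -/
def IsPerfectMap {α β : Type*} [TopologicalSpace α] [TopologicalSpace β] (f : α → β) : Prop :=
  Continuous f ∧ IsClosedMap f ∧ ∀ b : β, IsCompact (f ⁻¹' {b})

/-- A space is countably compact if every countable open cover has a finite subcover. -/
def CountablyCompact (X : Type*) [TopologicalSpace X] : Prop :=
  ∀ U : ℕ → Set X, (∀ n, IsOpen (U n)) → (⋃ n, U n) = Set.univ →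
    ∃ t : Finset ℕ, (⋃ n ∈ t, U n) = Set.univ

universe u

/-- The functions on `X × Z` that do not distinguish points of `Z` on which all members of `E`
agree. -/
def factoring (X : Type*) {Z : Type*} [TopologicalSpace X] [TopologicalSpace Z]
    (E : Set C(Z, ℝ)) : Set (Cp (X × Z)) :=
  {f | ∀ x z z', (∀ φ ∈ E, φ z = φ z') → f.1 (x, z) = f.1 (x, z')}

theorem Cp.continuous_eval {T : Type*} [TopologicalSpace T] (t : T) :
    Continuous fun f : Cp T => f.1 t :=
  (continuous_apply t).comp continuous_subtype_val

theorem isClosed_factoring (X : Type*) {Z : Type*} [TopologicalSpace X] [TopologicalSpace Z]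
    (E : Set C(Z, ℝ)) : IsClosed (factoring X E) := by
  simp only [factoring, ofPred_forall]
  refine isClosed_iInter fun x => isClosed_iInter fun z => isClosed_iInter fun z' =>
    isClosed_iInter fun _ => isClosed_eq (Cp.continuous_eval _) (Cp.continuous_eval _)

/-- Pulled-back members of `G` and `E`, as functions on the product `X × Z`. -/
def pullbacks {X Z : Type*} [TopologicalSpace X] [TopologicalSpace Z]
    (G : Set C(X, ℝ)) (E : Set C(Z, ℝ)) : Set (X × Z → ℝ) :=
  (fun g p => g p.1) '' G ∪ (fun φ p => φ p.2) '' E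

/-- Real constants lie in every closed rational algebra of functions. -/
theorem const_mem_topologicalClosure {T : Type*} (A : Subalgebra ℚ (T → ℝ)) (c : ℝ) :
    (fun _ => c) ∈ A.topologicalClosure := by
  have hc : c ∈ closure (range ((↑) : ℚ → ℝ)) := Rat.denseRange_cast c
  refine map_mem_closure (f := fun (c : ℝ) (_ : T) => c) (by fun_prop) hc ?_
  rintro _ ⟨q, rfl⟩
  exact A.algebraMap_mem q

/-- A function that is constant on the classes of points not separated by `𝒢` is a pointwise
limit of elements of the rational algebra generated by `𝒢`. -/
theorem mem_closure_adjoin {T : Type*} (𝒢 : Set (T → ℝ)) (f : T → ℝ)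
    (hf : ∀ s t, (∀ g ∈ 𝒢, g s = g t) → f s = f t) :
    f ∈ closure (Algebra.adjoin ℚ 𝒢 : Set (T → ℝ)) := by
  classical
  set R := (Algebra.adjoin ℚ 𝒢).topologicalClosure
  have hgen : ∀ g ∈ 𝒢, g ∈ R := fun g hg =>
    (Algebra.adjoin ℚ 𝒢).le_topologicalClosure (Algebra.subset_adjoin hg)
  have hconst : ∀ c : ℝ, (fun _ => c) ∈ R := const_mem_topologicalClosure _
  have agree : ∀ s t, (∀ g ∈ 𝒢, g s = g t) → ∀ r ∈ R, r s = r t := by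
    intro s t hst r hr
    refine closure_minimal (t := {r : T → ℝ | r s = r t}) (fun r hr => ?_)
      (isClosed_eq (by fun_prop) (by fun_prop)) hr
    induction hr using Algebra.adjoin_induction with
    | mem g hg => exact hst g hg
    | algebraMap q => rfl
    | add a b _ _ ha hb => exact congrArg₂ (· + ·) ha hb
    | mul a b _ _ ha hb => exact congrArg₂ (· * ·) ha hb
  have interp : ∀ S : Finset T, ∃ r ∈ R, ∀ s ∈ S, r s = f s := by
    intro S
    induction S using Finset.induction_on with
    | empty => exact ⟨0, R.zero_mem, by simp⟩
    | insert t S _ ih =>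
      obtain ⟨r, hr, hrf⟩ := ih
      by_cases hsep : ∃ s ∈ S, ∀ g ∈ 𝒢, g s = g t
      · obtain ⟨s, hs, hst⟩ := hsep
        refine ⟨r, hr, fun u hu => ?_⟩
        rcases Finset.mem_insert.1 hu with rfl | hu
        · rw [← agree s _ hst r hr, hrf s hs, hf s _ hst]
        · exact hrf u hu
      · push Not at hsep
        have bump : ∀ s ∈ S, ∃ b ∈ R, b s = 0 ∧ b t = 1 := by
          intro s hs
          obtain ⟨g, hg, hne⟩ := hsep s hs
          refine ⟨(fun _ => (g t - g s)⁻¹) * (g - fun _ => g s),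
            R.mul_mem (hconst _) (R.sub_mem (hgen g hg) (hconst _)), by simp, ?_⟩
          have : g t - g s ≠ 0 := sub_ne_zero.2 (Ne.symm hne)
          simp [this]
        choose! b hbR hb0 hb1 using bump
        refine ⟨r + (fun _ => f t - r t) * ∏ s ∈ S, b s,
          R.add_mem hr (R.mul_mem (hconst _) (R.prod_mem hbR)), fun u hu => ?_⟩
        rcases Finset.mem_insert.1 hu with rfl | hu
        · simp [Finset.prod_apply, Finset.prod_congr rfl hb1]
        · have : ∏ s ∈ S, b s u = 0 := Finset.prod_eq_zero hu (hb0 u hu)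
          simp [Finset.prod_apply, this, hrf u hu]
  have hclosed : IsClosed (R : Set (T → ℝ)) := Subalgebra.isClosed_topologicalClosure _
  change f ∈ (R : Set (T → ℝ))
  rw [← hclosed.closure_eq, mem_closure_iff]
  intro U hU hfU
  obtain ⟨I, u, hu, hIU⟩ := isOpen_pi_iff.1 hU f hfU
  obtain ⟨r, hr, hrf⟩ := interp I
  exact ⟨r, hIU fun i hi => (hrf i hi).symm ▸ (hu i hi).2, hr⟩

theorem Set.Countable.adjoin_rat {T : Type*} {𝒢 : Set (T → ℝ)} (h𝒢 : 𝒢.Countable) :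
    (Algebra.adjoin ℚ 𝒢 : Set (T → ℝ)).Countable := by
  have := Algebra.lift_cardinalMk_adjoin_le ℚ 𝒢
  rw [← Cardinal.le_aleph0_iff_set_countable]
  have h𝒢' := Cardinal.le_aleph0_iff_set_countable.2 h𝒢
  simp only [Cardinal.lift_id'] at this
  refine this.trans (max_le (max_le ?_ ?_) le_rfl)
  · simp
  · simpa using h𝒢'

theorem continuous_of_mem_adjoin_pullbacks {X Z : Type*} [TopologicalSpace X] [TopologicalSpace Z]
    {G : Set C(X, ℝ)} {E : Set C(Z, ℝ)} {a : X × Z → ℝ}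
    (ha : a ∈ Algebra.adjoin ℚ (pullbacks G E)) : Continuous a := by
  induction ha using Algebra.adjoin_induction with
  | mem g hg => rcases hg with ⟨g, -, rfl⟩ | ⟨g, -, rfl⟩ <;> fun_prop
  | algebraMap q => exact continuous_const
  | add a b _ _ ha hb => exact ha.add hb
  | mul a b _ _ ha hb => exact ha.mul hb

theorem exists_mem_adjoin_pullbacks {X Z : Type*} [TopologicalSpace X] [TopologicalSpace Z]
    {G : Set C(X, ℝ)} {E : ℕ → Set C(Z, ℝ)} (hE : Monotone E) {a : X × Z → ℝ}
    (ha : a ∈ Algebra.adjoin ℚ (pullbacks G (⋃ n, E n))) :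
    ∃ n, a ∈ Algebra.adjoin ℚ (pullbacks G (E n)) := by
  have mono : Monotone fun n => Algebra.adjoin ℚ (pullbacks G (E n)) := fun m n hmn =>
    Algebra.adjoin_mono (union_subset_union_right _ (image_mono (hE hmn)))
  induction ha using Algebra.adjoin_induction with
  | mem g hg =>
    rcases hg with hg | ⟨φ, hφ, rfl⟩
    · exact ⟨0, Algebra.subset_adjoin (Or.inl hg)⟩
    · obtain ⟨n, hn⟩ := mem_iUnion.1 hφ
      exact ⟨n, Algebra.subset_adjoin (Or.inr ⟨φ, hn, rfl⟩)⟩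
  | algebraMap q => exact ⟨0, Subalgebra.algebraMap_mem _ q⟩
  | add a b _ _ ha hb =>
    obtain ⟨⟨m, hm⟩, n, hn⟩ := And.intro ha hb
    exact ⟨max m n, add_mem (mono (le_max_left m n) hm) (mono (le_max_right m n) hn)⟩
  | mul a b _ _ ha hb =>
    obtain ⟨⟨m, hm⟩, n, hn⟩ := And.intro ha hb
    exact ⟨max m n, mul_mem (mono (le_max_left m n) hm) (mono (le_max_right m n) hn)⟩

theorem HasCountableNetweight.separableSpace {X : Type*} [TopologicalSpace X]
    (hX : HasCountableNetweight X) : SeparableSpace X := by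
  obtain ⟨S, hS, hnet⟩ := hX
  rcases isEmpty_or_nonempty X with hX | hX
  · infer_instance
  choose! p hp using fun (s : Set X) (hs : s.Nonempty) => hs
  refine ⟨p '' S, hS.image p, fun x => mem_closure_iff.2 fun U hU hxU => ?_⟩
  obtain ⟨s, hs, hxs, hsU⟩ := hnet x U hU hxU
  exact ⟨p s, hsU (hp s ⟨x, hxs⟩), s, hs, rfl⟩

/-- A Tychonoff space of countable netweight has a countable point-separating family of
continuous functions. -/
theorem HasCountableNetweight.exists_countable_separating {X : Type*} [TopologicalSpace X]
    [T35Space X] (hX : HasCountableNetweight X) :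
    ∃ G : Set C(X, ℝ), G.Countable ∧ ∀ x y, (∀ g ∈ G, g x = g y) → x = y := by
  obtain ⟨S, hS, hnet⟩ := hX
  choose! F hF using fun (st : Set X × Set X)
    (h : ∃ g : C(X, ℝ), ∀ x ∈ st.1, ∀ y ∈ st.2, g x ≠ g y) => h
  refine ⟨F '' (S ×ˢ S), (hS.prod hS).image F, fun x y hxy => ?_⟩
  by_contra hne
  obtain ⟨g, hg, hgx, hgy⟩ := CompletelyRegularSpace.completely_regular x {y}
    isClosed_singleton hne
  have hgc : Continuous fun x => (g x : ℝ) := by fun_prop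
  obtain ⟨s, hs, hxs, hsg⟩ := hnet x {x | (g x : ℝ) < 1 / 2}
    (isOpen_lt hgc continuous_const) (by simp [hgx])
  obtain ⟨t, ht, hyt, htg⟩ := hnet y {x | 1 / 2 < (g x : ℝ)}
    (isOpen_lt continuous_const hgc) (by
      have : g y = 1 := hgy rfl
      simp only [mem_ofPred_eq, this]; norm_num)
  refine hF (s, t) ⟨⟨_, hgc⟩, fun a ha b hb => ((hsg ha).trans (htg hb)).ne⟩ x hxs y hyt ?_
  exact hxy _ ⟨(s, t), ⟨hs, ht⟩, rfl⟩

/-- For a continuous map between function spaces there is a countability-preserving operation on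
families of functions on `Z`, such that the limits of chains closed under it describe quotients
of `Z` respected by the map. -/
theorem exists_closing_off {X Y Z : Type*} [TopologicalSpace X] [TopologicalSpace Y]
    [TopologicalSpace Z] [T35Space X] (hX : HasCountableNetweight X)
    (hY : HasCountableNetweight Y) {h : Cp (X × Z) → Cp (Y × Z)} (hh : Continuous h) :
    ∃ Φ : Set C(Z, ℝ) → Set C(Z, ℝ), (∀ E, E.Countable → (Φ E).Countable) ∧
      ∀ E : ℕ → Set C(Z, ℝ), Monotone E → (∀ n, Φ (E n) ⊆ E (n + 1)) →
        MapsTo h (factoring X (⋃ n, E n)) (factoring Y (⋃ n, E n)) := by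
  obtain ⟨G, hG, hsep⟩ := hX.exists_countable_separating
  have := hY.separableSpace
  obtain ⟨D, hD, hdense⟩ := exists_countable_dense Y
  let algebra (E : Set C(Z, ℝ)) : Set (Cp (X × Z)) :=
    {a | a.1 ∈ Algebra.adjoin ℚ (pullbacks G E)}
  have halg : ∀ E, E.Countable → (algebra E).Countable := fun E hE =>
    ((hG.image _).union (hE.image _)).adjoin_rat.preimage Subtype.val_injective
  let slice (b : Cp (Y × Z)) (y : Y) : C(Z, ℝ) :=
    ⟨fun z => b.1 (y, z), b.2.comp (by fun_prop)⟩
  refine ⟨fun E => image2 (fun a y => slice (h a) y) (algebra E) D,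
    fun E hE => (halg E hE).image2 hD _, fun E hmono hE f hf => ?_⟩
  have hcl : f ∈ closure (algebra (⋃ n, E n)) := by
    rw [closure_subtype]
    refine closure_mono ?_ (mem_closure_adjoin (pullbacks G (⋃ n, E n)) f.1 ?_)
    · exact fun a ha => ⟨⟨a, continuous_of_mem_adjoin_pullbacks ha⟩, ha, rfl⟩
    · rintro ⟨x, z⟩ ⟨x', z'⟩ hst
      obtain rfl : x = x' := hsep x x' fun g hg => hst _ (Or.inl ⟨g, hg, rfl⟩)
      exact hf x z z' fun φ hφ => hst _ (Or.inr ⟨φ, hφ, rfl⟩)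
  refine closure_minimal (t := h ⁻¹' factoring Y (⋃ n, E n)) (fun a ha => ?_)
    ((isClosed_factoring Y _).preimage hh) hcl
  obtain ⟨n, hn⟩ := exists_mem_adjoin_pullbacks hmono ha
  intro y z z' hz
  have hcont : ∀ z, Continuous fun y => (h a).1 (y, z) := fun z => (h a).2.comp (by fun_prop)
  refine congrFun ((hcont z).ext_on hdense (hcont z') fun d hd => ?_) y
  exact hz (slice (h a) d) (mem_iUnion.2 ⟨n + 1, hE n ⟨a, hn, d, hd, rfl⟩⟩)

/-- Composition with `id × q`. -/
def pullback (X : Type*) {Z M : Type*} [TopologicalSpace X] [TopologicalSpace Z]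
    [TopologicalSpace M] (q : C(Z, M)) (f : Cp (X × M)) : Cp (X × Z) :=
  ⟨fun p => f.1 (p.1, q p.2), f.2.comp (by fun_prop)⟩

theorem isEmbedding_pullback (X : Type*) {Z M : Type*} [TopologicalSpace X] [TopologicalSpace Z]
    [TopologicalSpace M] (q : C(Z, M)) (hq : Surjective q) : IsEmbedding (pullback X q) := by
  obtain ⟨r, hr⟩ := hq.hasRightInverse
  let back (f : X × Z → ℝ) : X × M → ℝ := fun p => f (p.1, r p.2)
  have hcomp : back ∘ Subtype.val ∘ pullback X q = Subtype.val := by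
    funext f p
    simp [back, pullback, hr p.2]
  have hcont : Continuous (pullback X q) :=
    Continuous.subtype_mk (continuous_pi fun p => Cp.continuous_eval _) _
  refine IsEmbedding.of_comp hcont (g := back ∘ Subtype.val) ?_ ?_
  · exact (by fun_prop : Continuous back).comp continuous_subtype_val
  · exact (show (back ∘ Subtype.val) ∘ pullback X q = Subtype.val from hcomp) ▸
      IsEmbedding.subtypeVal

theorem range_pullback (X : Type*) {Z M : Type*} [TopologicalSpace X] [TopologicalSpace Z]
    [TopologicalSpace M] [CompactSpace Z] [T2Space M] {E : Set C(Z, ℝ)} (q : C(Z, M))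
    (hq : Surjective q) (hE : ∀ z z', q z = q z' ↔ ∀ φ ∈ E, φ z = φ z') :
    range (pullback X q) = factoring X E := by
  ext f
  constructor
  · rintro ⟨f, rfl⟩ x z z' hz
    simp only [pullback, (hE z z').2 hz]
  · intro hf
    obtain ⟨r, hr⟩ := hq.hasRightInverse
    have hfac : ∀ x z, f.1 (x, r (q z)) = f.1 (x, z) := fun x z =>
      hf x _ _ ((hE _ _).1 (hr (q z)))
    have hquot : IsQuotientMap (Prod.map id q : X × Z → X × M) :=
      ((isProperMap_id.prodMap q.continuous.isProperMap).isClosedMap).isQuotientMap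
        (by fun_prop) (surjective_id.prodMap hq)
    refine ⟨⟨fun p => f.1 (p.1, r p.2), hquot.continuous_iff.2 ?_⟩, ?_⟩
    · exact f.2.congr fun p => (hfac p.1 p.2).symm
    · exact Subtype.ext (funext fun p => hfac p.1 p.2)

/-- If `X` and `Y` are Tychonoff spaces of countable netweight, `Z` is compact Hausdorff, and
`Cp (X × Z)` is homeomorphic to `Cp (Y × Z)`, then there is a compact metrizable space `M` with
`Cp (X × M)` homeomorphic to `Cp (Y × M)`. -/
theorem stmt1 {X Y Z : Type u} [TopologicalSpace X] [TopologicalSpace Y] [TopologicalSpace Z]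
    [T35Space X] [T35Space Y] [CompactSpace Z] [T2Space Z]
    (hX : HasCountableNetweight X) (hY : HasCountableNetweight Y)
    (h : Nonempty (Cp (X × Z) ≃ₜ Cp (Y × Z))) :
    ∃ (M : Type u) (tM : TopologicalSpace M), CompactSpace M ∧ MetrizableSpace M ∧
      Nonempty (Cp (X × M) ≃ₜ Cp (Y × M)) := by
  obtain ⟨h⟩ := h
  obtain ⟨Φ, hΦ, hΦmaps⟩ := exists_closing_off hX hY h.continuous
  obtain ⟨Ψ, hΨ, hΨmaps⟩ := exists_closing_off hY hX h.symm.continuous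
  let E : ℕ → Set C(Z, ℝ) := fun n => (fun F => F ∪ (Φ F ∪ Ψ F))^[n] ∅
  have hsucc : ∀ n, E (n + 1) = E n ∪ (Φ (E n) ∪ Ψ (E n)) := fun n => iterate_succ_apply' _ n _
  have hmono : Monotone E := monotone_nat_of_le_succ fun n => by
    rw [hsucc]; exact subset_union_left
  have hcount : ∀ n, (E n).Countable := by
    intro n
    induction n with
    | zero => exact countable_empty
    | succ n ih => rw [hsucc]; exact ih.union ((hΦ _ ih).union (hΨ _ ih))
  have hmaps := hΦmaps E hmono fun n => by
    rw [hsucc]; exact subset_union_left.trans subset_union_right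
  have hmaps' := hΨmaps E hmono fun n => by
    rw [hsucc]; exact subset_union_right.trans subset_union_right
  set L := ⋃ n, E n
  have : Countable L := (countable_iUnion hcount).to_subtype
  let e : Z → L → ℝ := fun z φ => φ.1 z
  have he : Continuous e := by fun_prop
  let q : C(Z, range e) := ⟨rangeFactorization e, by fun_prop⟩
  have hq : Surjective q := rangeFactorization_surjective
  have hqE : ∀ z z', q z = q z' ↔ ∀ φ ∈ L, φ z = φ z' := fun z z' => by
    simp [q, e, rangeFactorization, Subtype.ext_iff, funext_iff]
  have himage : h '' factoring X L = factoring Y L :=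
    hmaps.image_subset.antisymm fun g hg => ⟨h.symm g, hmaps' hg, h.apply_symm_apply g⟩
  refine ⟨range e, inferInstance, isCompact_iff_compactSpace.1 (isCompact_range he),
    metrizableSpace_of_t3_secondCountable _, ⟨?_⟩⟩
  exact (isEmbedding_pullback X q hq).toHomeomorph.trans <|
    (Homeomorph.setCongr (range_pullback X q hq hqE)).trans <|
    (h.image _).trans <| (Homeomorph.setCongr himage).trans <|
    (Homeomorph.setCongr (range_pullback Y q hq hqE).symm).trans
      (isEmbedding_pullback Y q hq).toHomeomorph.symm
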